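/- arXiv:2108.03042 — 2 statements merged into one kernel-verified Lean document; each statement's English description precedes it below -/
import Mathlib

section
/- Let p : ℝ → ℝ be continuous on (0,∞), differentiable at every point of (0,∞) with p'(z) > 0 for all z > 0, and with z ↦ p(z)/z² integrable on (0,ρ] for every ρ > 0. Let δ > 0 and β ≥ 2, and let H_δ be the regularized pressure potential. Then H_δ is twice differentiable on (0,∞) and H_δ''(ρ) ≥ 2δ for every ρ > 0; in particular H_δ is strictly convex on (0,∞) (property H2 of Lemma 2.4). -/
open MeasureTheory Set

/-- Property H2 of Lemma 2.4: if `p' > 0` on `(0,∞)`, `δ > 0` and `β ≥ 2`, the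
regularized pressure potential `H_δ` is twice differentiable on `(0,∞)` with
`H_δ'' ≥ 2δ` there; in particular `H_δ` is strictly convex on `(0,∞)`. -/
theorem regularized_potential_strictly_convex (p : ℝ → ℝ)
    (hp_cont : ContinuousOn p (Ioi (0:ℝ)))
    (hp_diff : ∀ z : ℝ, 0 < z → DifferentiableAt ℝ p z)
    (hp_mono : ∀ z : ℝ, 0 < z → 0 < deriv p z)
    (hp_int : ∀ ρ : ℝ, 0 < ρ → IntegrableOn (fun z => p z / z ^ 2) (Ioc (0:ℝ) ρ))
    (δ β : ℝ) (hδ : 0 < δ) (hβ : 2 ≤ β)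
    (H Hδ : ℝ → ℝ)
    (hH : ∀ ρ : ℝ, H ρ = ρ * ∫ z in Ioc (0:ℝ) ρ, p z / z ^ 2)
    (hHδ : ∀ ρ : ℝ, Hδ ρ = H ρ + (δ / (β - 1)) * ρ ^ β + δ * ρ ^ 2) :
    (∀ ρ : ℝ, 0 < ρ →
      DifferentiableAt ℝ Hδ ρ ∧ DifferentiableAt ℝ (deriv Hδ) ρ ∧
        2 * δ ≤ deriv (deriv Hδ) ρ) ∧
    StrictConvexOn ℝ (Ioi (0:ℝ)) Hδ := by
  have hI : ∀ ρ : ℝ, 0 < ρ →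
      HasDerivAt (fun r : ℝ => ∫ z in Ioc (0:ℝ) r, p z / z ^ 2) (p ρ / ρ ^ 2) ρ := by
    intro ρ hρ
    have hc : ContinuousOn (fun z => p z / z ^ 2) (Ioi (0:ℝ)) :=
      hp_cont.div (by fun_prop) (fun z hz => pow_ne_zero 2 (ne_of_gt hz))
    have h1 : HasDerivAt (fun r : ℝ => ∫ z in (0:ℝ)..r, p z / z ^ 2) (p ρ / ρ ^ 2) ρ := by
      apply intervalIntegral.integral_hasDerivAt_right
      · exact (intervalIntegrable_iff_integrableOn_Ioc_of_le hρ.le).2 (hp_int ρ hρ)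
      · exact hc.stronglyMeasurableAtFilter isOpen_Ioi ρ hρ
      · exact hc.continuousAt (Ioi_mem_nhds hρ)
    refine h1.congr_of_eventuallyEq ?_
    filter_upwards [Ioi_mem_nhds hρ] with r hr
    exact (intervalIntegral.integral_of_le (le_of_lt hr)).symm
  have hb : β - 1 ≠ 0 := by linarith
  have hfun : Hδ = fun ρ => ρ * (∫ z in Ioc (0:ℝ) ρ, p z / z ^ 2)
      + (δ / (β - 1)) * ρ ^ β + δ * ρ ^ 2 := by
    funext ρ
    rw [hHδ, hH]
  have hD1 : ∀ ρ : ℝ, 0 < ρ → HasDerivAt Hδ ((∫ z in Ioc (0:ℝ) ρ, p z / z ^ 2) + p ρ / ρ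
      + (δ / (β - 1)) * (β * ρ ^ (β - 1)) + δ * (2 * ρ)) ρ := by
    intro ρ hρ
    rw [hfun]
    have h := (((hasDerivAt_id' ρ).mul (hI ρ hρ)).add
      ((Real.hasDerivAt_rpow_const (p := β) (Or.inl hρ.ne')).const_mul (δ / (β - 1)))).add
      ((hasDerivAt_pow 2 ρ).const_mul δ)
    refine h.congr_deriv ?_
    have : ρ * (p ρ / ρ ^ 2) = p ρ / ρ := by field_simp
    rw [this]
    simp
  have hD2 : ∀ ρ : ℝ, 0 < ρ → HasDerivAt (deriv Hδ)
      (deriv p ρ / ρ + δ * β * ρ ^ (β - 1 - 1) + 2 * δ) ρ := by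
    intro ρ hρ
    have h := (((hI ρ hρ).add ((hp_diff ρ hρ).hasDerivAt.div (hasDerivAt_id' ρ) hρ.ne')).add
      (((Real.hasDerivAt_rpow_const (p := β - 1) (Or.inl hρ.ne')).const_mul β).const_mul
        (δ / (β - 1)))).add
      (((hasDerivAt_id' ρ).const_mul 2).const_mul δ)
    refine (h.congr_of_eventuallyEq ?_).congr_deriv ?_
    · filter_upwards [Ioi_mem_nhds hρ] with r hr
      exact (hD1 r hr).deriv
    · have hr := hρ.ne'
      generalize ρ ^ (β - 1 - 1) = t
      field_simp
      ring
  have hge : ∀ ρ : ℝ, 0 < ρ → 2 * δ ≤ deriv (deriv Hδ) ρ := by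
    intro ρ hρ
    rw [(hD2 ρ hρ).deriv]
    have h1 : 0 < deriv p ρ / ρ := div_pos (hp_mono ρ hρ) hρ
    have h2 : 0 ≤ δ * β * ρ ^ (β - 1 - 1) :=
      mul_nonneg (mul_nonneg hδ.le (by linarith)) (Real.rpow_nonneg hρ.le _)
    linarith
  refine ⟨fun ρ hρ => ⟨(hD1 ρ hρ).differentiableAt, (hD2 ρ hρ).differentiableAt, hge ρ hρ⟩, ?_⟩
  apply strictConvexOn_of_deriv2_pos (convex_Ioi 0)
  · exact fun ρ hρ => (hD1 ρ hρ).continuousAt.continuousWithinAt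
  · intro ρ hρ
    rw [interior_Ioi] at hρ
    have := hge ρ hρ
    simp only [Function.iterate_succ, Function.iterate_zero, Function.comp, id]
    linarith
end

section
/- Let n ∈ ℕ, ε ∈ ℝ and t ∈ ℝ. Let ρ : ℝ × ℝⁿ → ℝ be C² and v : ℝ × ℝⁿ → ℝⁿ be C¹, and assume the dissipative continuity equation ∂_t ρ + ∇_x ρ · v + ρ · div v = ε Δρ holds at every point of ℝ × ℝⁿ. Let φ : ℝ → ℝⁿ be differentiable with φ'(s) = v(t+s, φ(s)) for all s, and let d : ℝ → ℝ be differentiable with d'(s) = div v(t+s, φ(s))·d(s) for all s (the Jacobian determinant along the flow). Then for every s ∈ ℝ the function s ↦ ρ(t+s, φ(s))·d(s) is differentiable at s with derivative ε·Δρ(t+s, φ(s))·d(s). -/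
/-- The spatial divergence of a velocity field `v : ℝ × ℝⁿ → ℝⁿ`:
the trace of the spatial derivative `D_x v`. -/
noncomputable def spaceDiv (n : ℕ) (v : ℝ × EuclideanSpace ℝ (Fin n) → EuclideanSpace ℝ (Fin n))
    (q : ℝ × EuclideanSpace ℝ (Fin n)) : ℝ :=
  ∑ i : Fin n, fderiv ℝ v q (0, EuclideanSpace.single i 1) i

/-- The spatial Laplacian of `ρ : ℝ × ℝⁿ → ℝ`: the sum of the second
derivatives in the spatial coordinate directions. -/
noncomputable def spaceLap (n : ℕ) (ρ : ℝ × EuclideanSpace ℝ (Fin n) → ℝ)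
    (q : ℝ × EuclideanSpace ℝ (Fin n)) : ℝ :=
  ∑ i : Fin n,
    fderiv ℝ (fun q' => fderiv ℝ ρ q' ((0 : ℝ), EuclideanSpace.single i 1)) q
      ((0 : ℝ), EuclideanSpace.single i 1)

/-- Final transport identity of Corollary 4.3: along the characteristics `φ` of a `C¹`
velocity field `v`, with `d` the Jacobian determinant along the flow (`d' = (div v ∘ φ) d`),
a `C²` solution of the dissipative continuity equation satisfies
`d/ds (ρ(t+s, φ(s)) d(s)) = ε Δρ(t+s, φ(s)) d(s)`. -/
theorem density_times_jacobian_along_flow (n : ℕ) (ε t : ℝ)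
    (ρ : ℝ × EuclideanSpace ℝ (Fin n) → ℝ) (hρ : ContDiff ℝ 2 ρ)
    (v : ℝ × EuclideanSpace ℝ (Fin n) → EuclideanSpace ℝ (Fin n)) (hv : ContDiff ℝ 1 v)
    (hPDE : ∀ q : ℝ × EuclideanSpace ℝ (Fin n),
      fderiv ℝ ρ q ((1 : ℝ), (0 : EuclideanSpace ℝ (Fin n)))
        + fderiv ℝ ρ q ((0 : ℝ), v q) + ρ q * spaceDiv n v q = ε * spaceLap n ρ q)
    (φ : ℝ → EuclideanSpace ℝ (Fin n))
    (hφ : ∀ s : ℝ, HasDerivAt φ (v (t + s, φ s)) s)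
    (d : ℝ → ℝ)
    (hd : ∀ s : ℝ, HasDerivAt d (spaceDiv n v (t + s, φ s) * d s) s) :
    ∀ s : ℝ, HasDerivAt (fun s' => ρ (t + s', φ s') * d s')
      (ε * spaceLap n ρ (t + s, φ s) * d s) s := by
  intro s
  have h1 : HasDerivAt (fun s' : ℝ => (t + s', φ s')) ((1 : ℝ), v (t + s, φ s)) s :=
    ((hasDerivAt_id s).const_add t).prodMk (hφ s)
  have h2 : HasFDerivAt ρ (fderiv ℝ ρ (t + s, φ s)) (t + s, φ s) :=
    (hρ.differentiable (by norm_num) _).hasFDerivAt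
  have h3 : HasDerivAt (fun s' : ℝ => ρ (t + s', φ s'))
      (fderiv ℝ ρ (t + s, φ s) ((1 : ℝ), v (t + s, φ s))) s :=
    h2.comp_hasDerivAt s h1
  have h4 : fderiv ℝ ρ (t + s, φ s) ((1 : ℝ), v (t + s, φ s))
      = fderiv ℝ ρ (t + s, φ s) ((1 : ℝ), (0 : EuclideanSpace ℝ (Fin n)))
        + fderiv ℝ ρ (t + s, φ s) ((0 : ℝ), v (t + s, φ s)) := by
    rw [← map_add]
    simp
  have h5 := h3.mul (hd s)
  refine h5.congr_deriv ?_
  rw [h4, ← hPDE]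
  ring
end
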